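/- Let ψ^{AR} be a density operator on A⊗R with A = A₁⊗A₂ and d_A ≥ 2. Then ∫_{U(A)} Tr[ (σ^{A₂R}(U))² ] dU = ((p+q)/2) Tr[(ψ^R)²] + ((p−q)/2) Tr[(ψ^{AR})²], where p = (d_{A₁}+d_{A₂})/(d_A+1) and q = (d_{A₁}−d_{A₂})/(d_A−1). -/

import Mathlib

open Matrix MeasureTheory
open scoped Kronecker ComplexOrder

noncomputable instance matMeas {m n : Type*} : MeasurableSpace (Matrix m n ℂ) :=
  (inferInstance : MeasurableSpace (m → n → ℂ))

/-- `σ^{A₂R}(U) = Tr_{A₁}[(U ⊗ I_R) ψ (U ⊗ I_R)ᴴ]`. -/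
noncomputable def sigmaA2R {ιA₁ ιA₂ ιR : Type} [Fintype ιA₁] [Fintype ιA₂] [Fintype ιR]
    [DecidableEq ιR]
    (ψ : Matrix ((ιA₁ × ιA₂) × ιR) ((ιA₁ × ιA₂) × ιR) ℂ)
    (U : Matrix (ιA₁ × ιA₂) (ιA₁ × ιA₂) ℂ) : Matrix (ιA₂ × ιR) (ιA₂ × ιR) ℂ :=
  Matrix.of fun i j => ∑ a₁ : ιA₁,
    ((U ⊗ₖ (1 : Matrix ιR ιR ℂ)) * ψ * (U ⊗ₖ (1 : Matrix ιR ιR ℂ))ᴴ)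
      ((a₁, i.1), i.2) ((a₁, j.1), j.2)

/-- Partial trace over the first tensor factor. -/
noncomputable def ptrFst {α β : Type*} [Fintype α] (M : Matrix (α × β) (α × β) ℂ) :
    Matrix β β ℂ :=
  Matrix.of fun i j => ∑ a : α, M (a, i) (a, j)

/-! The purity of `σ^{A₂R}(U)` is linear in two replicas of `ψ`: it equals `Tr[T(X) S]` before
averaging, where `X` is the contraction of `ψ ⊗ ψ` with the swap of the two copies of `R`,
`T(X) = (U ⊗ U) X (U ⊗ U)ᴴ`, and `S` swaps the two copies of `A₂`. By invariance of `μ`, the average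
of `T(X)` commutes with every `V ⊗ V`, so it is `α 1 + β F` with `F` the swap of the two copies of
`A`, and pairing with `1` and `F` determines `α` and `β`.

For the commutant of the `V ⊗ V`: projections `P` span all matrices and `1 + (z - 1) P` is unitary
for `|z| = 1`, so an element `M` of the commutant also commutes with every `A ⊗ 1 + 1 ⊗ A`. Hence
the partial traces of `M` and `F M` are scalars by Schur's lemma, and contracting the relations for
matrix units expresses `M` through these partial traces. -/

section StarProjection

lemma one_add_smul_mem_unitary {R A : Type*} [CommRing R] [StarRing R] [Ring A] [StarRing A]
    [Algebra R A] [StarModule R A] {p : A} (hp : IsStarProjection p) {z : R}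
    (hz : z ∈ unitary R) : 1 + (z - 1) • p ∈ unitary A := by
  have mul_eq (a b : R) : (1 + (a - 1) • p) * (1 + (b - 1) • p) = 1 + (a * b - 1) • p := by
    simp only [add_mul, mul_add, one_mul, mul_one, smul_mul_smul_comm, hp.isIdempotentElem.eq]
    module
  have star_eq : star (1 + (z - 1) • p) = 1 + (star z - 1) • p := by
    simp only [star_add, star_smul, star_sub, star_one, hp.isSelfAdjoint.star_eq]
  constructor
  · rw [star_eq, mul_eq, Unitary.star_mul_self_of_mem hz, sub_self, zero_smul, add_zero]
  · rw [star_eq, mul_eq, Unitary.mul_star_self_of_mem hz, sub_self, zero_smul, add_zero]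

lemma isStarProjection_single_one {R n : Type*} [Semiring R] [StarRing R] [Fintype n]
    [DecidableEq n] (i : n) : IsStarProjection (single i i (1 : R)) := by
  constructor
  · simp [IsIdempotentElem]
  · simp [IsSelfAdjoint, star_eq_conjTranspose]

theorem span_isStarProjection_eq_top {n : Type*} [Fintype n] :
    Submodule.span ℂ {P : Matrix n n ℂ | IsStarProjection P} = ⊤ := by
  classical
  rw [eq_top_iff, ← span_selfAdjoint, Submodule.span_le]
  intro A hA
  have hA : A.IsHermitian := hA
  rw [SetLike.mem_coe, hA.spectral_theorem, ← sum_single_eq_diagonal, map_sum]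
  refine Submodule.sum_mem _ fun i _ => ?_
  rw [← mul_one ((RCLike.ofReal ∘ hA.eigenvalues) i), ← smul_eq_mul, ← smul_single, map_smul]
  exact Submodule.smul_mem _ _ (Submodule.subset_span ((isStarProjection_single_one i).map _))

end StarProjection

section PartialTrace

variable {α β : Type*} [Fintype α]

lemma ptrFst_add (M N : Matrix (α × β) (α × β) ℂ) : ptrFst (M + N) = ptrFst M + ptrFst N := by
  ext i j
  simp [ptrFst, Finset.sum_add_distrib]

variable [Fintype β]

lemma ptrFst_kronecker_one_mul [DecidableEq β] (A : Matrix α α ℂ)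
    (M : Matrix (α × β) (α × β) ℂ) : ptrFst ((A ⊗ₖ 1) * M) = ptrFst (M * (A ⊗ₖ 1)) := by
  ext i j
  simp only [ptrFst, of_apply, mul_apply, Fintype.sum_prod_type, kronecker_apply, one_apply,
    mul_ite, ite_mul, mul_one, mul_zero, zero_mul, Finset.sum_ite_eq, Finset.sum_ite_eq',
    Finset.mem_univ, if_true, mul_comm]
  exact Finset.sum_comm

lemma ptrFst_one_kronecker_mul [DecidableEq α] (A : Matrix β β ℂ)
    (M : Matrix (α × β) (α × β) ℂ) : ptrFst ((1 ⊗ₖ A) * M) = A * ptrFst M := by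
  ext i j
  simp only [ptrFst, of_apply, mul_apply, Fintype.sum_prod_type_right, kronecker_apply, one_apply,
    ite_mul, one_mul, zero_mul, Finset.sum_ite_eq, Finset.mem_univ, if_true, Finset.mul_sum]
  exact Finset.sum_comm

lemma ptrFst_mul_one_kronecker [DecidableEq α] (A : Matrix β β ℂ)
    (M : Matrix (α × β) (α × β) ℂ) : ptrFst (M * (1 ⊗ₖ A)) = ptrFst M * A := by
  ext i j
  simp only [ptrFst, of_apply, mul_apply, Fintype.sum_prod_type_right, kronecker_apply, one_apply,
    mul_ite, ite_mul, one_mul, mul_zero, zero_mul, Finset.sum_ite_eq', Finset.mem_univ, if_true,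
    Finset.sum_mul]
  exact Finset.sum_comm

end PartialTrace

section Commutant

variable {n : Type*} [DecidableEq n]

/-- The action `A ⊗ 1 + 1 ⊗ A` of the Lie algebra `𝔤𝔩(n)` on `ℂⁿ ⊗ ℂⁿ`, the infinitesimal version
of `U ↦ U ⊗ U`. -/
def lieKronecker (A : Matrix n n ℂ) : Matrix (n × n) (n × n) ℂ :=
  A ⊗ₖ 1 + 1 ⊗ₖ A

-- With `z = -1` and `z = i`, the terms `P ⊗ P` in the expansions of `U_z ⊗ U_z` for the unitary
-- `U_z = 1 + (z - 1) P` can be eliminated.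
lemma four_smul_lieKronecker (P : Matrix n n ℂ) :
    (4 : ℂ) • lieKronecker P = (4 + 2 * Complex.I) • 1
      - (4 : ℂ) • ((1 + (Complex.I - 1) • P) ⊗ₖ (1 + (Complex.I - 1) • P))
      - (2 * Complex.I) • ((1 + ((-1 : ℂ) - 1) • P) ⊗ₖ (1 + ((-1 : ℂ) - 1) • P)) := by
  simp only [lieKronecker, add_kronecker, kronecker_add, smul_kronecker, kronecker_smul,
    one_kronecker_one]
  match_scalars <;> ring_nf
  simp only [Complex.I_sq]
  norm_num

/-- The swap operator `F (x ⊗ y) = y ⊗ x` on `ℂⁿ ⊗ ℂⁿ`. -/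
def swapMatrix (n : Type*) [DecidableEq n] : Matrix (n × n) (n × n) ℂ :=
  Equiv.Perm.permMatrix ℂ (Equiv.prodComm n n)

lemma swapMatrix_apply (a b c d : n) :
    swapMatrix n (a, b) (c, d) = if a = d ∧ b = c then 1 else 0 := by
  simp [swapMatrix, PEquiv.toMatrix_apply, and_comm]

variable [Fintype n] {M : Matrix (n × n) (n × n) ℂ}

lemma mul_swapMatrix_apply (M : Matrix (n × n) (n × n) ℂ) (a b c d : n) :
    (M * swapMatrix n) (a, b) (c, d) = M (a, b) (d, c) := by
  simp [swapMatrix, PEquiv.mul_toMatrix_toPEquiv]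

lemma swapMatrix_mul_apply (M : Matrix (n × n) (n × n) ℂ) (a b c d : n) :
    (swapMatrix n * M) (a, b) (c, d) = M (b, a) (c, d) := by
  simp [swapMatrix, PEquiv.toMatrix_toPEquiv_mul]

lemma swapMatrix_mul_self : swapMatrix n * swapMatrix n = 1 := by
  ext ⟨a, b⟩ ⟨c, d⟩
  rw [mul_swapMatrix_apply]
  simp [swapMatrix_apply, one_apply]

lemma trace_swapMatrix : (swapMatrix n).trace = Fintype.card n := by
  simp [trace, swapMatrix_apply, Fintype.sum_prod_type, eq_comm]

lemma swapMatrix_mul_kronecker (A B : Matrix n n ℂ) :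
    swapMatrix n * (A ⊗ₖ B) = (B ⊗ₖ A) * swapMatrix n := by
  ext ⟨a, b⟩ ⟨c, d⟩
  rw [swapMatrix_mul_apply, mul_swapMatrix_apply, kronecker_apply, kronecker_apply, mul_comm]

lemma commute_lieKronecker (hM : ∀ U ∈ unitaryGroup n ℂ, Commute M (U ⊗ₖ U))
    (A : Matrix n n ℂ) : Commute M (lieKronecker A) := by
  have hA : A ∈ Submodule.span ℂ {P : Matrix n n ℂ | IsStarProjection P} := by
    rw [span_isStarProjection_eq_top]; trivial
  induction hA using Submodule.span_induction with
  | mem P hP =>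
    have commute_of_phase {z : ℂ} (hz : z ∈ unitary ℂ) :=
      hM _ (one_add_smul_mem_unitary (A := Matrix n n ℂ) hP hz)
    have hI : Complex.I ∈ unitary ℂ := by simp [Unitary.mem_iff]
    have hneg : (-1 : ℂ) ∈ unitary ℂ := by simp [Unitary.mem_iff]
    have h4 : Commute M ((4 : ℂ) • lieKronecker P) := by
      rw [four_smul_lieKronecker]
      exact (((Commute.one_right M).smul_right _).sub_right
        ((commute_of_phase hI).smul_right _)).sub_right ((commute_of_phase hneg).smul_right _)
    simpa using h4.smul_right (4⁻¹ : ℂ)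
  | zero => simp [lieKronecker]
  | add A B _ _ hA hB =>
    have : lieKronecker (A + B) = lieKronecker A + lieKronecker B := by
      simp only [lieKronecker, add_kronecker, kronecker_add]; abel
    exact this ▸ hA.add_right hB
  | smul c A _ hA =>
    have : lieKronecker (c • A) = c • lieKronecker A := by
      simp only [lieKronecker, smul_kronecker, kronecker_smul, smul_add]
    exact this ▸ hA.smul_right c

lemma apply_eq_of_commute_lieKronecker_single {i j : n}
    (h : Commute M (lieKronecker (single i j 1))) (a b c d : n) :
    (if j = c then M (a, b) (i, d) else 0) + (if j = d then M (a, b) (c, i) else 0)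
      = (if i = a then M (j, b) (c, d) else 0) + (if i = b then M (a, j) (c, d) else 0) := by
  have := congrFun₂ h.eq (a, b) (c, d)
  simpa [lieKronecker, mul_add, add_mul, mul_apply, Fintype.sum_prod_type, single_apply,
    one_apply, ite_and, Finset.sum_add_distrib, Finset.sum_ite_irrel] using this

lemma commute_ptrFst {A : Matrix n n ℂ} (h : Commute M (lieKronecker A)) :
    Commute (ptrFst M) A := by
  have h' := congrArg ptrFst h.eq
  rw [lieKronecker, mul_add, add_mul, ptrFst_add, ptrFst_add, ptrFst_kronecker_one_mul,
    ptrFst_one_kronecker_mul, ptrFst_mul_one_kronecker] at h'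
  exact add_left_cancel h'

lemma exists_ptrFst_eq_smul_one (h : ∀ A : Matrix n n ℂ, Commute M (lieKronecker A)) :
    ∃ x : ℂ, ptrFst M = x • 1 := by
  obtain ⟨x, hx⟩ := mem_range_scalar_of_commute_single (M := ptrFst M)
    fun i j _ => (commute_ptrFst (h (single i j 1))).symm
  exact ⟨x, by rw [← hx, scalar_apply, smul_one_eq_diagonal]⟩

lemma commute_swapMatrix_lieKronecker (A : Matrix n n ℂ) :
    Commute (swapMatrix n) (lieKronecker A) := by
  rw [Commute, SemiconjBy, lieKronecker, mul_add, add_mul, swapMatrix_mul_kronecker,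
    swapMatrix_mul_kronecker, add_comm]

-- Contract the relations `[M, E_ic ⊗ 1 + 1 ⊗ E_ic] = 0` over `c`.
lemma card_smul_add_mul_swapMatrix (h : ∀ A : Matrix n n ℂ, Commute M (lieKronecker A)) :
    (Fintype.card n : ℂ) • M + M * swapMatrix n
      = 1 ⊗ₖ ptrFst M + swapMatrix n * (1 ⊗ₖ ptrFst (swapMatrix n * M)) := by
  ext ⟨a, b⟩ ⟨i, d⟩
  have hsum := Finset.sum_congr (rfl : (Finset.univ : Finset n) = Finset.univ) fun c _ =>
    apply_eq_of_commute_lieKronecker_single (h (single i c 1)) a b c d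
  rw [Matrix.add_apply, Matrix.add_apply, mul_swapMatrix_apply, swapMatrix_mul_apply]
  simpa [Finset.sum_add_distrib, Finset.sum_ite_irrel, ptrFst, one_apply, swapMatrix_mul_apply,
    eq_comm] using hsum

lemma card_sq_sub_one_ne_zero (K α : Type*) [Ring K] [CharZero K] [Fintype α] [Nontrivial α] :
    (Fintype.card α : K) ^ 2 - 1 ≠ 0 := by
  have hcard : Fintype.card α ^ 2 ≠ 1 := by simpa using Fintype.one_lt_card.ne'
  rw [sub_ne_zero, ← Nat.cast_pow]
  exact_mod_cast hcard

theorem exists_eq_smul_one_add_smul_swapMatrix [Nontrivial n]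
    (hM : ∀ U ∈ unitaryGroup n ℂ, Commute M (U ⊗ₖ U)) :
    ∃ α β : ℂ, M = α • 1 + β • swapMatrix n := by
  have h := commute_lieKronecker hM
  obtain ⟨x, hx⟩ := exists_ptrFst_eq_smul_one h
  obtain ⟨y, hy⟩ := exists_ptrFst_eq_smul_one fun A =>
    (commute_swapMatrix_lieKronecker A).mul_left (h A)
  set d : ℂ := (Fintype.card n : ℂ)
  have hd : d ^ 2 - 1 ≠ 0 := card_sq_sub_one_ne_zero ℂ n
  have hcontr : d • M + M * swapMatrix n = x • 1 + y • swapMatrix n := by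
    rw [card_smul_add_mul_swapMatrix h, hx, hy]
    simp [kronecker_smul]
  have hmul : (d ^ 2 - 1) • M = (d * x - y) • 1 + (d * y - x) • swapMatrix n := by
    have := congrArg (· * (d • 1 - swapMatrix n)) hcontr
    simp only [mul_sub, add_mul, mul_assoc, swapMatrix_mul_self, mul_smul_comm, smul_mul_assoc,
      mul_one, one_mul] at this
    linear_combination (norm := module) this
  refine ⟨(d ^ 2 - 1)⁻¹ * (d * x - y), (d ^ 2 - 1)⁻¹ * (d * y - x), ?_⟩
  rw [mul_smul, mul_smul, ← smul_add, ← hmul, inv_smul_smul₀ hd]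

end Commutant

instance matrixBorelSpace {m n : Type*} [Countable m] [Countable n] :
    BorelSpace (Matrix m n ℂ) :=
  inferInstanceAs (BorelSpace (m → n → ℂ))

section Twirl

open scoped Matrix.Norms.L2Operator

variable {n : Type*} [Fintype n] [DecidableEq n] {μ : Measure (unitaryGroup n ℂ)}

/-- The twirl `∫ (U ⊗ U) X (U ⊗ U)ᴴ dU`, the projection of `X` onto the commutant of the `U ⊗ U`
when `μ` is the Haar probability measure. -/
noncomputable def twirl (μ : Measure (unitaryGroup n ℂ)) (X : Matrix (n × n) (n × n) ℂ) :
    Matrix (n × n) (n × n) ℂ :=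
  ∫ U : unitaryGroup n ℂ, (U.1 ⊗ₖ U.1) * X * (U.1 ⊗ₖ U.1)ᴴ ∂μ

lemma integrable_conj_kronecker_self [IsFiniteMeasure μ] (X : Matrix (n × n) (n × n) ℂ) :
    Integrable (fun U : unitaryGroup n ℂ => (U.1 ⊗ₖ U.1) * X * (U.1 ⊗ₖ U.1)ᴴ) μ := by
  have hcont : Continuous fun U : unitaryGroup n ℂ => (U.1 ⊗ₖ U.1) * X * (U.1 ⊗ₖ U.1)ᴴ := by
    have hkron : Continuous fun U : unitaryGroup n ℂ => U.1 ⊗ₖ U.1 :=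
      continuous_matrix fun i j =>
        (continuous_subtype_val.matrix_elem i.1 j.1).mul
          (continuous_subtype_val.matrix_elem i.2 j.2)
    fun_prop
  refine Integrable.of_bound hcont.aestronglyMeasurable ‖X‖ (.of_forall fun U => le_of_eq ?_)
  have hU : U.1 ⊗ₖ U.1 ∈ unitaryGroup (n × n) ℂ := kronecker_mem_unitary U.2 U.2
  rw [← star_eq_conjTranspose, CStarRing.norm_mul_mem_unitary _ (Unitary.star_mem hU),
    CStarRing.norm_mem_unitary_mul _ hU]

lemma trace_twirl_mul [IsFiniteMeasure μ] (X Y : Matrix (n × n) (n × n) ℂ) :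
    (twirl μ X * Y).trace
      = ∫ U : unitaryGroup n ℂ, ((U.1 ⊗ₖ U.1) * X * (U.1 ⊗ₖ U.1)ᴴ * Y).trace ∂μ := by
  let L : Matrix (n × n) (n × n) ℂ →L[ℂ] ℂ :=
    (traceLinearMap (n × n) ℂ ℂ ∘ₗ LinearMap.mulRight ℂ Y).toContinuousLinearMap
  exact (L.integral_comp_comm (integrable_conj_kronecker_self X)).symm

lemma trace_twirl_mul_of_commute [IsProbabilityMeasure μ] {X Y : Matrix (n × n) (n × n) ℂ}
    (hY : ∀ U ∈ unitaryGroup n ℂ, Commute Y (U ⊗ₖ U)) :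
    (twirl μ X * Y).trace = (X * Y).trace := by
  have (U : unitaryGroup n ℂ) :
      ((U.1 ⊗ₖ U.1) * X * (U.1 ⊗ₖ U.1)ᴴ * Y).trace = (X * Y).trace := by
    have hU : (U.1 ⊗ₖ U.1)ᴴ * (U.1 ⊗ₖ U.1) = 1 :=
      Unitary.star_mul_self_of_mem (kronecker_mem_unitary U.2 U.2)
    rw [mul_assoc, mul_assoc, trace_mul_comm, mul_assoc, mul_assoc, (hY U.1 U.2).eq,
      ← mul_assoc _ _ Y, hU, one_mul]
  simp [trace_twirl_mul, this]

lemma commute_twirl [IsFiniteMeasure μ] [μ.IsMulLeftInvariant] (X : Matrix (n × n) (n × n) ℂ)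
    {V : Matrix n n ℂ} (hV : V ∈ unitaryGroup n ℂ) : Commute (twirl μ X) (V ⊗ₖ V) := by
  have hVV : (V ⊗ₖ V)ᴴ * (V ⊗ₖ V) = 1 :=
    Unitary.star_mul_self_of_mem (kronecker_mem_unitary hV hV)
  have hint := integrable_conj_kronecker_self (μ := μ) X
  calc twirl μ X * (V ⊗ₖ V)
      = ∫ U : unitaryGroup n ℂ, (U.1 ⊗ₖ U.1) * X * (U.1 ⊗ₖ U.1)ᴴ * (V ⊗ₖ V) ∂μ :=
        (integral_mul_const_of_integrable hint).symm
    _ = ∫ U : unitaryGroup n ℂ,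
          ((V * U.1) ⊗ₖ (V * U.1)) * X * ((V * U.1) ⊗ₖ (V * U.1))ᴴ * (V ⊗ₖ V) ∂μ :=
        (integral_mul_left_eq_self _ (⟨V, hV⟩ : unitaryGroup n ℂ)).symm
    _ = ∫ U : unitaryGroup n ℂ, (V ⊗ₖ V) * ((U.1 ⊗ₖ U.1) * X * (U.1 ⊗ₖ U.1)ᴴ) ∂μ := by
        simp only [mul_kronecker_mul, conjTranspose_mul, mul_assoc, hVV, mul_one]
    _ = (V ⊗ₖ V) * twirl μ X := integral_const_mul_of_integrable hint

theorem twirl_eq [Nontrivial n] [IsProbabilityMeasure μ] [μ.IsMulLeftInvariant]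
    (X : Matrix (n × n) (n × n) ℂ) :
    twirl μ X = ((Fintype.card n * X.trace - (X * swapMatrix n).trace) /
          (Fintype.card n * ((Fintype.card n : ℂ) ^ 2 - 1))) • 1
      + ((Fintype.card n * (X * swapMatrix n).trace - X.trace) /
          (Fintype.card n * ((Fintype.card n : ℂ) ^ 2 - 1))) • swapMatrix n := by
  obtain ⟨α, β, h⟩ := exists_eq_smul_one_add_smul_swapMatrix (M := twirl μ X)
    fun V hV => commute_twirl X hV
  have htrace : X.trace = α * Fintype.card n ^ 2 + β * Fintype.card n := by
    have := trace_twirl_mul_of_commute (μ := μ) (X := X) (Y := 1) fun _ _ => Commute.one_left _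
    simpa [h, trace_swapMatrix, sq] using this.symm
  have hswap : (X * swapMatrix n).trace = α * Fintype.card n + β * Fintype.card n ^ 2 := by
    have := trace_twirl_mul_of_commute (μ := μ) (X := X) fun U _ => swapMatrix_mul_kronecker U U
    simpa [h, add_mul, swapMatrix_mul_self, trace_swapMatrix, sq] using this.symm
  have hcard : (Fintype.card n : ℂ) ≠ 0 := by simp
  have hcard_sq := card_sq_sub_one_ne_zero ℂ n
  rw [h, htrace, hswap]
  congr 2 <;> field_simp <;> ring

end Twirl

section Purity

variable {n R α β : Type*} [Fintype R]

/-- The contraction `Tr_{R⊗R}[(ψ ⊗ ψ) F_R]` of two replicas of `ψ` with the swap `F_R` of the two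
copies of `R`, written with the blocks of `ψ` as `∑ r s, ψ_{rs} ⊗ ψ_{sr}`. Every purity considered
below is a linear functional of it. -/
def replicaContraction (ψ : Matrix (n × R) (n × R) ℂ) : Matrix (n × n) (n × n) ℂ :=
  ∑ r, ∑ s, ψ.submatrix (·, r) (·, s) ⊗ₖ ψ.submatrix (·, s) (·, r)

lemma trace_mul_eq_sum_trace_submatrix_mul {K : Type*} [NonUnitalNonAssocSemiring K]
    [Fintype n] (M N : Matrix (n × R) (n × R) K) :
    (M * N).trace
      = ∑ r, ∑ s, (M.submatrix (·, r) (·, s) * N.submatrix (·, s) (·, r)).trace := by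
  simp only [trace, diag_apply, mul_apply, submatrix_apply, Fintype.sum_prod_type_right]
  exact Finset.sum_congr rfl fun r _ => Finset.sum_comm

lemma trace_replicaContraction [Fintype n] (ψ : Matrix (n × R) (n × R) ℂ) :
    (replicaContraction ψ).trace = (ptrFst ψ * ptrFst ψ).trace := by
  simp only [replicaContraction, trace_sum, trace_kronecker]
  simp only [trace, diag_apply, mul_apply, ptrFst, of_apply, submatrix_apply]

lemma trace_kronecker_mul_swapMatrix [Fintype n] [DecidableEq n] (X Y : Matrix n n ℂ) :
    ((X ⊗ₖ Y) * swapMatrix n).trace = (X * Y).trace := by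
  simp only [trace, diag_apply, Fintype.sum_prod_type, mul_swapMatrix_apply, kronecker_apply]
  simp only [mul_apply]

lemma trace_replicaContraction_mul_swapMatrix [Fintype n] [DecidableEq n]
    (ψ : Matrix (n × R) (n × R) ℂ) :
    (replicaContraction ψ * swapMatrix n).trace = (ψ * ψ).trace := by
  simp only [replicaContraction, Finset.sum_mul, trace_sum, trace_kronecker_mul_swapMatrix,
    trace_mul_eq_sum_trace_submatrix_mul ψ ψ]

lemma submatrix_kronecker_one_conj [Fintype n] [DecidableEq R] (ψ : Matrix (n × R) (n × R) ℂ)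
    (U : Matrix n n ℂ) (r s : R) :
    ((U ⊗ₖ (1 : Matrix R R ℂ)) * ψ * (U ⊗ₖ (1 : Matrix R R ℂ))ᴴ).submatrix (·, r) (·, s)
      = U * ψ.submatrix (·, r) (·, s) * Uᴴ := by
  ext a b
  simp [mul_apply, Fintype.sum_prod_type, one_apply, apply_ite]

lemma replicaContraction_kronecker_one_conj [Fintype n] [DecidableEq R]
    (ψ : Matrix (n × R) (n × R) ℂ) (U : Matrix n n ℂ) :
    replicaContraction ((U ⊗ₖ (1 : Matrix R R ℂ)) * ψ * (U ⊗ₖ (1 : Matrix R R ℂ))ᴴ)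
      = (U ⊗ₖ U) * replicaContraction ψ * (U ⊗ₖ U)ᴴ := by
  simp only [replicaContraction, submatrix_kronecker_one_conj]
  simp only [mul_kronecker_mul, conjTranspose_kronecker, Finset.mul_sum, Finset.sum_mul]

variable [Fintype α] [DecidableEq α] [Fintype β] [DecidableEq β]

/-- The operator on two copies of `ℂᵅ ⊗ ℂᵝ` that exchanges the second tensor factors,
`(x₁ ⊗ y₁) ⊗ (x₂ ⊗ y₂) ↦ (x₁ ⊗ y₂) ⊗ (x₂ ⊗ y₁)`. -/
def swapSndMatrix (α β : Type*) [DecidableEq α] [DecidableEq β] :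
    Matrix ((α × β) × (α × β)) ((α × β) × (α × β)) ℂ :=
  of fun i j => if i.1.1 = j.1.1 ∧ i.1.2 = j.2.2 ∧ i.2.1 = j.2.1 ∧ i.2.2 = j.1.2 then 1 else 0

lemma mul_swapSndMatrix_apply (M : Matrix ((α × β) × (α × β)) ((α × β) × (α × β)) ℂ)
    (i : (α × β) × (α × β)) (k l : α × β) :
    (M * swapSndMatrix α β) i (k, l) = M i ((k.1, l.2), (l.1, k.2)) := by
  simp [swapSndMatrix, mul_apply, Fintype.sum_prod_type, ite_and, Finset.sum_ite_irrel]

lemma trace_kronecker_mul_swapSndMatrix (X Y : Matrix (α × β) (α × β) ℂ) :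
    ((X ⊗ₖ Y) * swapSndMatrix α β).trace = (ptrFst X * ptrFst Y).trace := by
  simp only [trace, diag_apply]
  rw [Fintype.sum_prod_type]
  simp only [mul_swapSndMatrix_apply, kronecker_apply, Fintype.sum_prod_type_right]
  simp only [mul_apply, ptrFst, of_apply, Finset.sum_mul_sum]
  exact Finset.sum_congr rfl fun b _ => Finset.sum_comm

lemma trace_swapSndMatrix :
    (swapSndMatrix α β).trace = (Fintype.card α : ℂ) ^ 2 * Fintype.card β := by
  have ptrFst_one : ptrFst (1 : Matrix (α × β) (α × β) ℂ) = (Fintype.card α : ℂ) • 1 := by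
    ext i j
    simp [ptrFst, one_apply]
  have := trace_kronecker_mul_swapSndMatrix (1 : Matrix (α × β) (α × β) ℂ) 1
  simpa [ptrFst_one, ← mul_assoc, sq] using this

lemma trace_swapMatrix_mul_swapSndMatrix :
    (swapMatrix (α × β) * swapSndMatrix α β).trace
      = Fintype.card α * (Fintype.card β : ℂ) ^ 2 := by
  simp only [trace, diag_apply, Fintype.sum_prod_type, mul_swapSndMatrix_apply,
    swapMatrix_apply, Prod.mk.injEq]
  simp [ite_and, sq]

end Purity

section Average

variable {ιA₁ ιA₂ ιR : Type} [Fintype ιA₁] [DecidableEq ιA₁] [Fintype ιA₂] [DecidableEq ιA₂]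
  [Fintype ιR] [DecidableEq ιR]

lemma trace_sigmaA2R_mul_self (ψ : Matrix ((ιA₁ × ιA₂) × ιR) ((ιA₁ × ιA₂) × ιR) ℂ)
    (U : Matrix (ιA₁ × ιA₂) (ιA₁ × ιA₂) ℂ) :
    (sigmaA2R ψ U * sigmaA2R ψ U).trace
      = ((U ⊗ₖ U) * replicaContraction ψ * (U ⊗ₖ U)ᴴ * swapSndMatrix ιA₁ ιA₂).trace := by
  rw [← replicaContraction_kronecker_one_conj, trace_mul_eq_sum_trace_submatrix_mul]
  simp only [replicaContraction, Finset.sum_mul, trace_sum, trace_kronecker_mul_swapSndMatrix]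
  rfl

theorem average_purity_sigmaA2R_general
    (hdA : 2 ≤ Fintype.card ιA₁ * Fintype.card ιA₂)
    (ψ : Matrix ((ιA₁ × ιA₂) × ιR) ((ιA₁ × ιA₂) × ιR) ℂ)
    (μ : Measure (Matrix.unitaryGroup (ιA₁ × ιA₂) ℂ)) [IsProbabilityMeasure μ]
    [μ.IsMulLeftInvariant] :
    (∫ U : Matrix.unitaryGroup (ιA₁ × ιA₂) ℂ,
        (sigmaA2R ψ (U : Matrix (ιA₁ × ιA₂) (ιA₁ × ιA₂) ℂ)
          * sigmaA2R ψ (U : Matrix (ιA₁ × ιA₂) (ιA₁ × ιA₂) ℂ)).trace ∂μ)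
      = ((((Fintype.card ιA₁ : ℂ) + (Fintype.card ιA₂ : ℂ)) /
            ((Fintype.card ιA₁ : ℂ) * (Fintype.card ιA₂ : ℂ) + 1)
          + ((Fintype.card ιA₁ : ℂ) - (Fintype.card ιA₂ : ℂ)) /
            ((Fintype.card ιA₁ : ℂ) * (Fintype.card ιA₂ : ℂ) - 1)) / 2)
          * (ptrFst ψ * ptrFst ψ).trace
        + ((((Fintype.card ιA₁ : ℂ) + (Fintype.card ιA₂ : ℂ)) /
            ((Fintype.card ιA₁ : ℂ) * (Fintype.card ιA₂ : ℂ) + 1)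
          - ((Fintype.card ιA₁ : ℂ) - (Fintype.card ιA₂ : ℂ)) /
            ((Fintype.card ιA₁ : ℂ) * (Fintype.card ιA₂ : ℂ) - 1)) / 2)
          * (ψ * ψ).trace := by
  rw [← Fintype.card_prod] at hdA
  have : Nontrivial (ιA₁ × ιA₂) := Fintype.one_lt_card_iff_nontrivial.mp hdA
  simp only [trace_sigmaA2R_mul_self, ← trace_twirl_mul]
  rw [twirl_eq, trace_replicaContraction, trace_replicaContraction_mul_swapMatrix, add_mul,
    trace_add, smul_mul_assoc, smul_mul_assoc, one_mul, trace_smul, trace_smul,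
    trace_swapSndMatrix, trace_swapMatrix_mul_swapSndMatrix, smul_eq_mul, smul_eq_mul]
  have hcard : (Fintype.card (ιA₁ × ιA₂) : ℂ) ≠ 0 := Nat.cast_ne_zero.mpr Fintype.card_ne_zero
  have hcard_sq := card_sq_sub_one_ne_zero ℂ (ιA₁ × ιA₂)
  have sq_sub_one (z : ℂ) : z ^ 2 - 1 = (z + 1) * (z - 1) := by ring
  rw [Fintype.card_prod, Nat.cast_mul] at hcard
  rw [sq_sub_one, Fintype.card_prod, Nat.cast_mul] at hcard_sq ⊢
  obtain ⟨hadd, hsub⟩ := mul_ne_zero_iff.mp hcard_sq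
  obtain ⟨h₁, h₂⟩ := mul_ne_zero_iff.mp hcard
  field_simp
  ring

end Average

/-- **Haar average of the purity of `σ^{A₂R}(U)`:**
`∫ Tr[(σ^{A₂R}(U))²] dU = ((p+q)/2) Tr[(ψ^R)²] + ((p−q)/2) Tr[(ψ^{AR})²]`, with
`p = (d_{A₁}+d_{A₂})/(d_A+1)` and `q = (d_{A₁}−d_{A₂})/(d_A−1)`. -/
theorem average_purity_sigmaA2R
    {ιA₁ ιA₂ ιR : Type} [Fintype ιA₁] [DecidableEq ιA₁] [Fintype ιA₂] [DecidableEq ιA₂]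
    [Fintype ιR] [DecidableEq ιR]
    (hdA : 2 ≤ Fintype.card ιA₁ * Fintype.card ιA₂)
    (ψ : Matrix ((ιA₁ × ιA₂) × ιR) ((ιA₁ × ιA₂) × ιR) ℂ)
    (hψ : ψ.PosSemidef) (hψtr : ψ.trace = 1)
    (μ : Measure (Matrix.unitaryGroup (ιA₁ × ιA₂) ℂ)) [IsProbabilityMeasure μ]
    (hμ : ∀ V : Matrix.unitaryGroup (ιA₁ × ιA₂) ℂ,
      μ.map (fun U : Matrix.unitaryGroup (ιA₁ × ιA₂) ℂ => V * U) = μ) :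
    (∫ U : Matrix.unitaryGroup (ιA₁ × ιA₂) ℂ,
        (sigmaA2R ψ (U : Matrix (ιA₁ × ιA₂) (ιA₁ × ιA₂) ℂ)
          * sigmaA2R ψ (U : Matrix (ιA₁ × ιA₂) (ιA₁ × ιA₂) ℂ)).trace ∂μ)
      = ((((Fintype.card ιA₁ : ℂ) + (Fintype.card ιA₂ : ℂ)) /
            ((Fintype.card ιA₁ : ℂ) * (Fintype.card ιA₂ : ℂ) + 1)
          + ((Fintype.card ιA₁ : ℂ) - (Fintype.card ιA₂ : ℂ)) /
            ((Fintype.card ιA₁ : ℂ) * (Fintype.card ιA₂ : ℂ) - 1)) / 2)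
          * (ptrFst ψ * ptrFst ψ).trace
        + ((((Fintype.card ιA₁ : ℂ) + (Fintype.card ιA₂ : ℂ)) /
            ((Fintype.card ιA₁ : ℂ) * (Fintype.card ιA₂ : ℂ) + 1)
          - ((Fintype.card ιA₁ : ℂ) - (Fintype.card ιA₂ : ℂ)) /
            ((Fintype.card ιA₁ : ℂ) * (Fintype.card ιA₂ : ℂ) - 1)) / 2)
          * (ψ * ψ).trace := by
  have : μ.IsMulLeftInvariant := ⟨hμ⟩
  exact average_purity_sigmaA2R_general hdA ψ μ
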